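/- arXiv:2111.13808 — 8 statements merged into one kernel-verified Lean document; each statement's English description precedes it below -/
import Mathlib

section
/- Let A, B ∈ ℝ^{n×n}. The pair {A+B, A−B} has the column W-property if and only if the matrix A + BD is nonsingular for every diagonal matrix D = diag(d_1,…,d_n) with d_i ∈ [−1,1] for all i = 1,…,n. -/
/-- `R` is a column representative of the pair `{M, N}`: each column of `R`
equals the corresponding column of `M` or of `N`. -/
def IsColumnRepresentative {n : ℕ} (M N R : Matrix (Fin n) (Fin n) ℝ) : Prop :=
  ∀ j : Fin n, (∀ i, R i j = M i j) ∨ (∀ i, R i j = N i j)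

/-- The pair `{M, N}` has the column W-property: the determinants of all its
column representative matrices are all positive or all negative. -/
def ColumnWProperty {n : ℕ} (M N : Matrix (Fin n) (Fin n) ℝ) : Prop :=
  (∀ R, IsColumnRepresentative M N R → 0 < R.det) ∨
    (∀ R, IsColumnRepresentative M N R → R.det < 0)

lemma upd_eq {n : ℕ} (A B : Matrix (Fin n) (Fin n) ℝ) (d : Fin n → ℝ) (j : Fin n) (t : ℝ) :
    A + B * Matrix.diagonal (Function.update d j t) =
      (A + B * Matrix.diagonal d).updateCol j (fun i => A i j + B i j * t) := by
  ext i k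
  by_cases h : k = j
  · subst h
    simp
  · simp [h]

lemma det_affine {n : ℕ} (A B : Matrix (Fin n) (Fin n) ℝ) (d : Fin n → ℝ) (j : Fin n) (t : ℝ) :
    (A + B * Matrix.diagonal (Function.update d j t)).det =
      (1 + t) / 2 * (A + B * Matrix.diagonal (Function.update d j 1)).det +
      (1 - t) / 2 * (A + B * Matrix.diagonal (Function.update d j (-1))).det := by
  rw [upd_eq, upd_eq, upd_eq, ← Matrix.det_updateCol_smul, ← Matrix.det_updateCol_smul,
    ← Matrix.det_updateCol_add]
  congr 2
  ext i
  simp only [Pi.add_apply, Pi.smul_apply, smul_eq_mul]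
  ring

lemma rep_sign {n : ℕ} (A B : Matrix (Fin n) (Fin n) ℝ) (d : Fin n → ℝ)
    (hd : ∀ i, d i = 1 ∨ d i = -1) :
    IsColumnRepresentative (A + B) (A - B) (A + B * Matrix.diagonal d) := by
  intro j
  rcases hd j with h | h
  · left; intro i; simp [h]
  · right; intro i; simp [h, sub_eq_add_neg]

lemma rep_exists {n : ℕ} (A B R : Matrix (Fin n) (Fin n) ℝ)
    (hR : IsColumnRepresentative (A + B) (A - B) R) :
    ∃ d : Fin n → ℝ, (∀ i, d i ∈ Set.Icc (-1 : ℝ) 1) ∧ R = A + B * Matrix.diagonal d := by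
  have h : ∀ j, ∃ t : ℝ, t ∈ Set.Icc (-1 : ℝ) 1 ∧ ∀ i, R i j = A i j + B i j * t := by
    intro j
    rcases hR j with h | h
    · exact ⟨1, by norm_num, fun i => by simp [h i]⟩
    · exact ⟨-1, by norm_num, fun i => by simp [h i, sub_eq_add_neg]⟩
  choose d hd hd' using h
  refine ⟨d, hd, ?_⟩
  ext i j
  simp [hd' j i]

lemma pos_box {n : ℕ} (A B : Matrix (Fin n) (Fin n) ℝ) (c : ℝ)
    (h : ∀ R, IsColumnRepresentative (A + B) (A - B) R → 0 < c * R.det)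
    (S : Finset (Fin n)) :
    ∀ d : Fin n → ℝ, (∀ i, d i ∈ Set.Icc (-1 : ℝ) 1) → (∀ i, i ∉ S → d i = 1 ∨ d i = -1) →
      0 < c * (A + B * Matrix.diagonal d).det := by
  induction S using Finset.induction_on with
  | empty =>
    intro d _ hd
    exact h _ (rep_sign A B d (fun i => hd i (by simp)))
  | insert j S _ ih =>
    intro d hd hS
    have key : ∀ s : ℝ, (s = 1 ∨ s = -1) →
        0 < c * (A + B * Matrix.diagonal (Function.update d j s)).det := by
      intro s hs
      apply ih
      · intro i
        by_cases hi : i = j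
        · subst hi
          rcases hs with rfl | rfl <;> simp
        · simpa [hi] using hd i
      · intro i hiS
        by_cases hi : i = j
        · subst hi
          simpa using hs
        · simpa [hi] using hS i (by simp [hi, hiS])
    have h1 := key 1 (Or.inl rfl)
    have h2 := key (-1) (Or.inr rfl)
    have h3 := det_affine A B d j (d j)
    rw [Function.update_eq_self] at h3
    rw [h3]
    obtain ⟨ha, hb⟩ := hd j
    rcases le_total 0 (d j) with h0 | h0
    · have := mul_pos (show 0 < (1 + d j) / 2 by linarith) h1
      have := mul_nonneg (show 0 ≤ (1 - d j) / 2 by linarith) h2.le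
      linarith
    · have := mul_nonneg (show 0 ≤ (1 + d j) / 2 by linarith) h1.le
      have := mul_pos (show 0 < (1 - d j) / 2 by linarith) h2
      linarith

theorem stmt0 {n : ℕ} (A B : Matrix (Fin n) (Fin n) ℝ) :
    ColumnWProperty (A + B) (A - B) ↔
      ∀ d : Fin n → ℝ, (∀ i, d i ∈ Set.Icc (-1 : ℝ) 1) →
        (A + B * Matrix.diagonal d).det ≠ 0 := by
  constructor
  · rintro (h | h) d hd h0
    · have := pos_box A B 1 (by simpa using h) Finset.univ d hd (by simp)
      simp [h0] at this
    · have := pos_box A B (-1) (by simpa using h) Finset.univ d hd (by simp)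
      simp [h0] at this
  · intro h
    have hpc : IsPreconnected {d : Fin n → ℝ | ∀ i, d i ∈ Set.Icc (-1 : ℝ) 1} := by
      have := isPreconnected_univ_pi (s := fun _ : Fin n => Set.Icc (-1 : ℝ) 1)
        (fun _ => isPreconnected_Icc)
      convert this using 1
      ext d
      simp only [Set.mem_setOf_eq, Set.mem_univ_pi]
    have hc : Continuous fun d : Fin n → ℝ => (A + B * Matrix.diagonal d).det := by
      fun_prop
    have hz : (0 : Fin n → ℝ) ∈ {d : Fin n → ℝ | ∀ i, d i ∈ Set.Icc (-1 : ℝ) 1} := by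
      intro i
      simp
    rcases lt_or_gt_of_ne (h 0 hz) with h0 | h0
    · right
      intro R hR
      obtain ⟨d, hd, rfl⟩ := rep_exists A B R hR
      by_contra! hn
      obtain ⟨e, he, he'⟩ := hpc.intermediate_value hz hd hc.continuousOn ⟨h0.le, hn⟩
      exact h e he he'
    · left
      intro R hR
      obtain ⟨d, hd, rfl⟩ := rep_exists A B R hR
      by_contra! hn
      obtain ⟨e, he, he'⟩ := hpc.intermediate_value hd hz hc.continuousOn ⟨hn, h0.le⟩
      exact h e he he'
end

section
/- Let A, B ∈ ℝ^{n×n}. Then det[(A+B)D₁ + (A−B)D₂] ≠ 0 for all nonnegative diagonal matrices D₁, D₂ ∈ ℝ^{n×n} with every diagonal entry of D₁ + D₂ positive, if and only if det(A + BD) ≠ 0 for every diagonal matrix D = diag(d_1,…,d_n) with d_i ∈ [−1,1] for all i = 1,…,n. -/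
theorem stmt1 {n : ℕ} (A B : Matrix (Fin n) (Fin n) ℝ) :
    (∀ d₁ d₂ : Fin n → ℝ, (∀ i, 0 ≤ d₁ i) → (∀ i, 0 ≤ d₂ i) → (∀ i, 0 < d₁ i + d₂ i) →
        ((A + B) * Matrix.diagonal d₁ + (A - B) * Matrix.diagonal d₂).det ≠ 0) ↔
      ∀ d : Fin n → ℝ, (∀ i, d i ∈ Set.Icc (-1 : ℝ) 1) →
        (A + B * Matrix.diagonal d).det ≠ 0 := by
  constructor
  · intro h d hd
    have key : A + B * Matrix.diagonal d =
        (A + B) * Matrix.diagonal (fun i => (1 + d i) / 2) +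
          (A - B) * Matrix.diagonal (fun i => (1 - d i) / 2) := by
      ext i j
      simp only [Matrix.add_apply, Matrix.sub_apply, Matrix.mul_diagonal]
      ring
    rw [key]
    apply h
    · intro i
      have := (hd i).1
      linarith
    · intro i
      have := (hd i).2
      linarith
    · intro i
      linarith
  · intro h d₁ d₂ h₁ h₂ hs
    have key : (A + B) * Matrix.diagonal d₁ + (A - B) * Matrix.diagonal d₂ =
        (A + B * Matrix.diagonal (fun i => (d₁ i - d₂ i) / (d₁ i + d₂ i))) *
          Matrix.diagonal (fun i => d₁ i + d₂ i) := by
      ext i j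
      have := (hs j).ne'
      simp only [Matrix.add_apply, Matrix.sub_apply, Matrix.mul_diagonal]
      field_simp
      ring
    rw [key, Matrix.det_mul, Matrix.det_diagonal]
    refine mul_ne_zero (h _ fun i => ⟨?_, ?_⟩) (Finset.prod_ne_zero_iff.2 fun i _ => (hs i).ne')
    · rw [le_div_iff₀ (hs i)]
      linarith [h₁ i]
    · rw [div_le_iff₀ (hs i)]
      linarith [h₂ i]
end

section
/- Let z = (μ,x) ∈ ℝ × ℝⁿ be such that either μ ≠ 0 or x_i ≠ 0 for all i. Then H is Fréchet differentiable at z and its derivative is the linear map H'(z) : (Δμ, Δx) ↦ (Δμ, AΔx + B(Δμ·V₁ + V₂Δx)), where V₁ ∈ ℝⁿ has entries (V₁)_i = μ/√(μ² + x_i²) − 1 and V₂ = diag(x_i/√(μ² + x_i²)). -/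
/-- The componentwise smoothing map `Φ(μ,x)_i = √(μ² + x_i²) − μ`. -/
noncomputable def PhiV {n : ℕ} (μ : ℝ) (x : Fin n → ℝ) : Fin n → ℝ :=
  fun i => Real.sqrt (μ ^ 2 + x i ^ 2) - μ

/-- `H(μ, x) = (μ, Ax + BΦ(μ,x) − b)`. -/
noncomputable def Hfun {n : ℕ} (A B : Matrix (Fin n) (Fin n) ℝ) (b : Fin n → ℝ)
    (z : ℝ × (Fin n → ℝ)) : ℝ × (Fin n → ℝ) :=
  (z.1, A.mulVec z.2 + B.mulVec (PhiV z.1 z.2) - b)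

theorem stmt9 {n : ℕ} (A B : Matrix (Fin n) (Fin n) ℝ) (b : Fin n → ℝ)
    (μ : ℝ) (x : Fin n → ℝ) (hz : μ ≠ 0 ∨ ∀ i, x i ≠ 0) :
    ∃ L : (ℝ × (Fin n → ℝ)) →L[ℝ] (ℝ × (Fin n → ℝ)),
      HasFDerivAt (Hfun A B b) L (μ, x) ∧
        ∀ Δμ : ℝ, ∀ Δx : Fin n → ℝ,
          L (Δμ, Δx) =
            (Δμ,
              A.mulVec Δx +
                B.mulVec (fun i =>
                  Δμ * (μ / Real.sqrt (μ ^ 2 + x i ^ 2) - 1) +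
                    (x i / Real.sqrt (μ ^ 2 + x i ^ 2)) * Δx i)) := by
  have hpos : ∀ i, μ ^ 2 + x i ^ 2 ≠ 0 := by
    intro i
    rcases hz with h | h
    · have := sq_pos_of_ne_zero h
      positivity
    · have := sq_pos_of_ne_zero (h i)
      positivity
  let F := ContinuousLinearMap.fst ℝ ℝ (Fin n → ℝ)
  let S := ContinuousLinearMap.snd ℝ ℝ (Fin n → ℝ)
  let P : Fin n → ((ℝ × (Fin n → ℝ)) →L[ℝ] ℝ) := fun i =>
    (ContinuousLinearMap.proj (R := ℝ) (φ := fun _ : Fin n => ℝ) i).comp S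
  let D : (ℝ × (Fin n → ℝ)) →L[ℝ] (Fin n → ℝ) := ContinuousLinearMap.pi fun i =>
    (μ / Real.sqrt (μ ^ 2 + x i ^ 2) - 1) • F + (x i / Real.sqrt (μ ^ 2 + x i ^ 2)) • P i
  have hPhi : HasFDerivAt (fun z : ℝ × (Fin n → ℝ) => PhiV z.1 z.2) D (μ, x) := by
    rw [hasFDerivAt_pi']
    intro i
    have h1 : HasFDerivAt (fun z : ℝ × (Fin n → ℝ) => z.1) F (μ, x) := F.hasFDerivAt
    have h2 : HasFDerivAt (fun z : ℝ × (Fin n → ℝ) => z.2 i) (P i) (μ, x) := (P i).hasFDerivAt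
    have h3 := (((h1.pow 2).add (h2.pow 2)).sqrt (hpos i)).sub h1
    refine h3.congr_fderiv ?_
    refine ContinuousLinearMap.ext fun v => ?_
    have hs : Real.sqrt (μ ^ 2 + x i ^ 2) ≠ 0 := by
      rw [Real.sqrt_ne_zero (by positivity)]
      exact hpos i
    simp [D]
    field_simp
    ring
  let LA := LinearMap.toContinuousLinearMap (Matrix.mulVecLin A)
  let LB := LinearMap.toContinuousLinearMap (Matrix.mulVecLin B)
  refine ⟨F.prod (LA.comp S + LB.comp D), ?_, ?_⟩
  · have hA : HasFDerivAt (fun z : ℝ × (Fin n → ℝ) => A.mulVec z.2) (LA.comp S) (μ, x) :=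
      (LA.comp S).hasFDerivAt
    have hB : HasFDerivAt (fun z : ℝ × (Fin n → ℝ) => B.mulVec (PhiV z.1 z.2))
        (LB.comp D) (μ, x) := by
      have hLB : HasFDerivAt LB LB (PhiV μ x) := LB.hasFDerivAt
      exact HasFDerivAt.comp (g := LB) (μ, x) hLB hPhi
    have h1 : HasFDerivAt (fun z : ℝ × (Fin n → ℝ) => z.1) F (μ, x) := F.hasFDerivAt
    exact h1.prodMk ((hA.add hB).sub_const b)
  · intro Δμ Δx
    have hD : D (Δμ, Δx) = fun i => Δμ * (μ / Real.sqrt (μ ^ 2 + x i ^ 2) - 1) +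
        (x i / Real.sqrt (μ ^ 2 + x i ^ 2)) * Δx i := by
      funext i
      simp [D, F, P, S]
      ring
    rw [← hD]
    rfl
end

section
/- Suppose A + BD is nonsingular for every diagonal matrix D = diag(d_1,…,d_n) with d_i ∈ [−1,1] for all i. Then for every z = (μ,x) ∈ ℝ × ℝⁿ with μ > 0, the matrix A + B·diag(x_i/√(μ² + x_i²)) is nonsingular, and the linear map H'(z) : (Δμ, Δx) ↦ (Δμ, AΔx + B(Δμ·V₁ + V₂Δx)) is bijective, where V₁ ∈ ℝⁿ has entries (V₁)_i = μ/√(μ² + x_i²) − 1 and V₂ = diag(x_i/√(μ² + x_i²)). -/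
theorem stmt10 {n : ℕ} (A B : Matrix (Fin n) (Fin n) ℝ)
    (hAB : ∀ d : Fin n → ℝ, (∀ i, d i ∈ Set.Icc (-1 : ℝ) 1) →
      (A + B * Matrix.diagonal d).det ≠ 0)
    (μ : ℝ) (x : Fin n → ℝ) (hμ : 0 < μ) :
    (A + B * Matrix.diagonal (fun i => x i / Real.sqrt (μ ^ 2 + x i ^ 2))).det ≠ 0 ∧
      Function.Bijective (fun Δ : ℝ × (Fin n → ℝ) =>
        ((Δ.1,
          A.mulVec Δ.2 +
            B.mulVec (fun i =>
              Δ.1 * (μ / Real.sqrt (μ ^ 2 + x i ^ 2) - 1) +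
                (x i / Real.sqrt (μ ^ 2 + x i ^ 2)) * Δ.2 i)) : ℝ × (Fin n → ℝ))) := by
  have hd : ∀ i, x i / Real.sqrt (μ ^ 2 + x i ^ 2) ∈ Set.Icc (-1 : ℝ) 1 := by
    intro i
    have hpos : 0 < Real.sqrt (μ ^ 2 + x i ^ 2) := Real.sqrt_pos.mpr (by positivity)
    have habs : |x i| ≤ Real.sqrt (μ ^ 2 + x i ^ 2) :=
      Real.abs_le_sqrt (by nlinarith [sq_nonneg μ])
    have h2 := abs_le.mp habs
    constructor
    · rw [le_div_iff₀ hpos]; linarith [h2.1]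
    · rw [div_le_iff₀ hpos]; linarith [h2.2]
  have hdet := hAB _ hd
  refine ⟨hdet, ?_⟩
  set d : Fin n → ℝ := fun i => x i / Real.sqrt (μ ^ 2 + x i ^ 2) with hddef
  set v : Fin n → ℝ := fun i => μ / Real.sqrt (μ ^ 2 + x i ^ 2) - 1 with hvdef
  set M := A + B * Matrix.diagonal d with hM
  have key : ∀ (t : ℝ) (y : Fin n → ℝ),
      A.mulVec y + B.mulVec (fun i =>
        t * (μ / Real.sqrt (μ ^ 2 + x i ^ 2) - 1) +
          (x i / Real.sqrt (μ ^ 2 + x i ^ 2)) * y i) = M.mulVec y + B.mulVec (t • v) := by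
    intro t y
    have h1 : (fun i => t * (μ / Real.sqrt (μ ^ 2 + x i ^ 2) - 1) +
          (x i / Real.sqrt (μ ^ 2 + x i ^ 2)) * y i) =
        t • v + (Matrix.diagonal d).mulVec y := by
      funext i
      simp [Matrix.mulVec_diagonal, hddef, hvdef]
    rw [h1, hM, Matrix.mulVec_add, Matrix.add_mulVec, Matrix.mulVec_mulVec]
    abel
  have hunit : IsUnit M := (Matrix.isUnit_iff_isUnit_det M).mpr (isUnit_iff_ne_zero.mpr hdet)
  have hinj := Matrix.mulVec_injective_iff_isUnit.mpr hunit
  have hsurj := Matrix.mulVec_surjective_iff_isUnit.mpr hunit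
  constructor
  · rintro ⟨t, y⟩ ⟨s, w⟩ h
    simp only [key, Prod.mk.injEq] at h
    obtain ⟨rfl, h⟩ := h
    rw [hinj (add_right_cancel h)]
  · rintro ⟨t, w⟩
    obtain ⟨y, hy⟩ := hsurj (w - B.mulVec (t • v))
    refine ⟨(t, y), ?_⟩
    simp only [key, Prod.mk.injEq, true_and]
    rw [hy, sub_add_cancel]
end

section
/- Suppose A + BD is nonsingular for every diagonal matrix D = diag(d_1,…,d_n) with d_i ∈ [−1,1] for all i. Then for every Λ > 0, the level set L(Λ) = { z = (μ,x) ∈ ℝ × ℝⁿ : ‖H(z)‖ ≤ Λ } is bounded, where ‖·‖ is the Euclidean norm on ℝ × ℝⁿ. -/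
/-- The vector part of `H`: `Ax + BΦ(μ,x) − b`. -/
noncomputable def Hvec {n : ℕ} (A B : Matrix (Fin n) (Fin n) ℝ) (b : Fin n → ℝ)
    (μ : ℝ) (x : Fin n → ℝ) : Fin n → ℝ :=
  A.mulVec x + B.mulVec (PhiV μ x) - b

/-- The squared Euclidean norm of `H(μ,x) = (μ, Ax + BΦ(μ,x) − b)`,
i.e. `‖H(z)‖² = μ² + ‖Ax + BΦ(μ,x) − b‖²`. -/
noncomputable def HnormSq {n : ℕ} (A B : Matrix (Fin n) (Fin n) ℝ) (b : Fin n → ℝ)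
    (μ : ℝ) (x : Fin n → ℝ) : ℝ :=
  μ ^ 2 + ∑ i, Hvec A B b μ x i ^ 2

theorem stmt12 {n : ℕ} (A B : Matrix (Fin n) (Fin n) ℝ) (b : Fin n → ℝ)
    (hAB : ∀ d : Fin n → ℝ, (∀ i, d i ∈ Set.Icc (-1 : ℝ) 1) →
      (A + B * Matrix.diagonal d).det ≠ 0)
    (Λ : ℝ) (hΛ : 0 < Λ) :
    Bornology.IsBounded
      {z : ℝ × (Fin n → ℝ) | Real.sqrt (HnormSq A B b z.1 z.2) ≤ Λ} := by
  classical
  let M : (Fin n → SignType) → Matrix (Fin n) (Fin n) ℝ :=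
    fun s => A + B * Matrix.diagonal (fun i => ((s i : SignType) : ℝ))
  let f : (Fin n → SignType) → ℝ × (Fin n → ℝ) × (Fin n → ℝ) → ℝ × (Fin n → ℝ) :=
    fun s p => (p.1, (M s)⁻¹.mulVec (p.2.1 + b - B.mulVec p.2.2))
  let K : Set (ℝ × (Fin n → ℝ) × (Fin n → ℝ)) :=
    Set.Icc (-Λ) Λ ×ˢ (Set.Icc (fun _ => -Λ) (fun _ => Λ)) ×ˢ
      (Set.Icc (fun _ => -(2 * Λ)) (fun _ => 2 * Λ))
  have hK : IsCompact K := isCompact_Icc.prod (isCompact_Icc.prod isCompact_Icc)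
  have hf : ∀ s, Continuous (f s) := by
    intro s
    refine continuous_fst.prodMk ?_
    refine Continuous.matrix_mulVec continuous_const ?_
    refine Continuous.sub (by fun_prop) ?_
    exact Continuous.matrix_mulVec continuous_const (by fun_prop)
  have hb : Bornology.IsBounded (⋃ s, f s '' K) :=
    (isCompact_iUnion fun s => hK.image (hf s)).isBounded
  refine hb.subset ?_
  rintro ⟨μ, x⟩ hz
  have hz : Real.sqrt (HnormSq A B b μ x) ≤ Λ := hz
  have hsq : HnormSq A B b μ x ≤ Λ ^ 2 := (Real.sqrt_le_left hΛ.le).1 hz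
  unfold HnormSq at hsq
  have hμ : |μ| ≤ Λ := by
    refine abs_le_of_sq_le_sq ?_ hΛ.le
    have : 0 ≤ ∑ i, Hvec A B b μ x i ^ 2 := Finset.sum_nonneg fun i _ => sq_nonneg _
    linarith
  have hh : ∀ i, |Hvec A B b μ x i| ≤ Λ := by
    intro i
    refine abs_le_of_sq_le_sq ?_ hΛ.le
    have := Finset.single_le_sum (f := fun i => Hvec A B b μ x i ^ 2)
      (fun i _ => sq_nonneg _) (Finset.mem_univ i)
    have h2 := sq_nonneg μ
    linarith
  let r : Fin n → ℝ := fun i => PhiV μ x i - |x i|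
  have hr : ∀ i, |r i| ≤ 2 * Λ := by
    intro i
    have h1 : |x i| ≤ Real.sqrt (μ ^ 2 + x i ^ 2) := by
      apply Real.abs_le_sqrt
      nlinarith [sq_nonneg μ]
    have h2 : Real.sqrt (μ ^ 2 + x i ^ 2) ≤ |μ| + |x i| := by
      apply Real.sqrt_le_iff.2
      refine ⟨by positivity, ?_⟩
      have := mul_nonneg (abs_nonneg μ) (abs_nonneg (x i))
      nlinarith [sq_abs μ, sq_abs (x i)]
    have h3 := le_abs_self μ
    have h4 := neg_abs_le μ
    simp only [r, PhiV]
    rw [abs_le]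
    constructor <;> linarith
  let s : Fin n → SignType := fun i => SignType.sign (x i)
  have hdet : IsUnit (M s).det := by
    refine isUnit_iff_ne_zero.2 (hAB _ fun i => ?_)
    cases s i <;> simp
  have hx : (M s).mulVec x = Hvec A B b μ x + b - B.mulVec r := by
    have e : PhiV μ x = (Matrix.diagonal (fun i => ((s i : SignType) : ℝ))).mulVec x + r := by
      ext i
      simp [Matrix.mulVec_diagonal, r, s, sign_mul_self]
    simp only [M, Hvec]
    rw [Matrix.add_mulVec, ← Matrix.mulVec_mulVec]
    rw [e]
    rw [Matrix.mulVec_add]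
    abel
  refine Set.mem_iUnion.2 ⟨s, (μ, Hvec A B b μ x, r), ⟨abs_le.1 hμ, ?_, ?_⟩, ?_⟩
  · exact ⟨fun i => (abs_le.1 (hh i)).1, fun i => (abs_le.1 (hh i)).2⟩
  · exact ⟨fun i => (abs_le.1 (hr i)).1, fun i => (abs_le.1 (hr i)).2⟩
  · simp only [f]
    rw [← hx, Matrix.mulVec_mulVec, Matrix.nonsing_inv_mul _ hdet, Matrix.one_mulVec]
end

section
/- Let z = (μ,x) ∈ ℝ × ℝⁿ with μ > 0, let 0 < β < μ, and let Δz = (Δμ, Δx) satisfy the perturbed Newton system H'(z)Δz = −H(z) + β e⁽¹⁾, where e⁽¹⁾ = (1, 0) ∈ ℝ × ℝⁿ and H'(z) : (Δμ, Δx) ↦ (Δμ, AΔx + B(Δμ·V₁ + V₂Δx)) with (V₁)_i = μ/√(μ² + x_i²) − 1 and V₂ = diag(x_i/√(μ² + x_i²)). Then the directional derivative of the merit function M(z) = ‖H(z)‖² at z along Δz satisfies M'(z)Δz = 2μ(β − μ) − 2‖Ax + BΦ(μ,x) − b‖² < 0; equivalently, ⟨H(z), H'(z)Δz⟩ = μβ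 − ‖H(z)‖² < 0. -/
/-- The squared Euclidean norm of `H(μ,x)`: the merit function `M(z) = ‖H(z)‖²`. -/
noncomputable def Mfun {n : ℕ} (A B : Matrix (Fin n) (Fin n) ℝ) (b : Fin n → ℝ)
    (μ : ℝ) (x : Fin n → ℝ) : ℝ :=
  μ ^ 2 + ∑ i, Hvec A B b μ x i ^ 2

/-- The vector part of `H'(z)` applied to the direction `(Δμ, Δx)`:
`AΔx + B(Δμ·V₁ + V₂Δx)` with `(V₁)_i = μ/√(μ²+x_i²) − 1` and
`V₂ = diag(x_i/√(μ²+x_i²))`. -/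
noncomputable def HDvec {n : ℕ} (A B : Matrix (Fin n) (Fin n) ℝ)
    (μ : ℝ) (x : Fin n → ℝ) (Δμ : ℝ) (Δx : Fin n → ℝ) : Fin n → ℝ :=
  A.mulVec Δx +
    B.mulVec (fun i =>
      Δμ * (μ / Real.sqrt (μ ^ 2 + x i ^ 2) - 1) +
        (x i / Real.sqrt (μ ^ 2 + x i ^ 2)) * Δx i)

theorem PhiV_hasDerivAt {n : ℕ} (μ : ℝ) (x : Fin n → ℝ) (hμ : 0 < μ) (Δμ : ℝ)
    (Δx : Fin n → ℝ) (i : Fin n) :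
    HasDerivAt (fun t : ℝ => PhiV (μ + t * Δμ) (x + t • Δx) i)
      (Δμ * (μ / Real.sqrt (μ ^ 2 + x i ^ 2) - 1) +
        (x i / Real.sqrt (μ ^ 2 + x i ^ 2)) * Δx i) 0 := by
  have h1 : HasDerivAt (fun t : ℝ => μ + t * Δμ) Δμ 0 := by
    simpa using ((hasDerivAt_id (0 : ℝ)).mul_const Δμ).const_add μ
  have h2 : HasDerivAt (fun t : ℝ => x i + t * Δx i) (Δx i) 0 := by
    simpa using ((hasDerivAt_id (0 : ℝ)).mul_const (Δx i)).const_add (x i)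
  have hpos : 0 < μ ^ 2 + x i ^ 2 := by positivity
  have hs : 0 < Real.sqrt (μ ^ 2 + x i ^ 2) := Real.sqrt_pos.2 hpos
  have h3 := (((h1.fun_pow 2).fun_add (h2.fun_pow 2)).sqrt (by simpa using hpos.ne')).fun_sub h1
  have h4 : (fun t : ℝ => PhiV (μ + t * Δμ) (x + t • Δx) i) =
      fun t : ℝ => Real.sqrt ((μ + t * Δμ) ^ 2 + (x i + t * Δx i) ^ 2) - (μ + t * Δμ) := by
    funext t
    simp [PhiV]
  rw [h4]
  refine h3.congr_deriv ?_
  simp only [zero_mul, add_zero]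
  field_simp
  norm_num
  ring

theorem Hvec_hasDerivAt {n : ℕ} (A B : Matrix (Fin n) (Fin n) ℝ) (b : Fin n → ℝ)
    (μ : ℝ) (x : Fin n → ℝ) (hμ : 0 < μ) (Δμ : ℝ) (Δx : Fin n → ℝ) (i : Fin n) :
    HasDerivAt (fun t : ℝ => Hvec A B b (μ + t * Δμ) (x + t • Δx) i)
      (HDvec A B μ x Δμ Δx i) 0 := by
  have hA : HasDerivAt (fun t : ℝ => ∑ j, A i j * (x j + t * Δx j)) (∑ j, A i j * Δx j) 0 := by
    refine HasDerivAt.fun_sum fun j _ => HasDerivAt.const_mul _ ?_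
    simpa using ((hasDerivAt_id (0 : ℝ)).mul_const (Δx j)).const_add (x j)
  have hB := HasDerivAt.fun_sum (u := Finset.univ) fun j _ =>
    (PhiV_hasDerivAt μ x hμ Δμ Δx j).const_mul (B i j)
  exact (hA.fun_add hB).sub_const (b i)

theorem stmt13 {n : ℕ} (A B : Matrix (Fin n) (Fin n) ℝ) (b : Fin n → ℝ)
    (μ : ℝ) (x : Fin n → ℝ) (β : ℝ) (hμ : 0 < μ) (hβ0 : 0 < β) (hβμ : β < μ)
    (Δμ : ℝ) (Δx : Fin n → ℝ)
    -- the perturbed Newton system `H'(z)Δz = −H(z) + β e⁽¹⁾`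
    (hN1 : Δμ = -μ + β)
    (hN2 : HDvec A B μ x Δμ Δx = -(Hvec A B b μ x)) :
    -- the directional derivative `M'(z)Δz = 2μ(β − μ) − 2‖Ax + BΦ(μ,x) − b‖² < 0`
    (HasDerivAt (fun t : ℝ => Mfun A B b (μ + t * Δμ) (x + t • Δx))
        (2 * μ * (β - μ) - 2 * ∑ i, Hvec A B b μ x i ^ 2) 0 ∧
      2 * μ * (β - μ) - 2 * ∑ i, Hvec A B b μ x i ^ 2 < 0) ∧
    -- equivalently `⟨H(z), H'(z)Δz⟩ = μβ − ‖H(z)‖² < 0`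
    (μ * Δμ + ∑ i, Hvec A B b μ x i * HDvec A B μ x Δμ Δx i =
        μ * β - Mfun A B b μ x ∧
      μ * β - Mfun A B b μ x < 0) := by
  have hS : 0 ≤ ∑ i, Hvec A B b μ x i ^ 2 := Finset.sum_nonneg fun i _ => sq_nonneg _
  have hm : 0 < μ * (μ - β) := mul_pos hμ (by linarith)
  have hsum : ∑ i, Hvec A B b μ x i * HDvec A B μ x Δμ Δx i =
      - ∑ i, Hvec A B b μ x i ^ 2 := by
    rw [hN2, ← Finset.sum_neg_distrib]
    refine Finset.sum_congr rfl fun i _ => ?_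
    simp only [Pi.neg_apply]
    ring
  refine ⟨⟨?_, by nlinarith⟩, ?_, ?_⟩
  · have h1 : HasDerivAt (fun t : ℝ => μ + t * Δμ) Δμ 0 := by
      simpa using ((hasDerivAt_id (0 : ℝ)).mul_const Δμ).const_add μ
    have h2 := HasDerivAt.fun_sum (u := Finset.univ) fun i _ =>
      (Hvec_hasDerivAt A B b μ x hμ Δμ Δx i).fun_pow 2
    have h3 := (h1.fun_pow 2).fun_add h2
    refine h3.congr_deriv ?_
    have h4 : 2 * μ * (β - μ) - 2 * ∑ i, Hvec A B b μ x i ^ 2 =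
        2 * μ * Δμ + ∑ i, 2 * (Hvec A B b μ x i * HDvec A B μ x Δμ Δx i) := by
      rw [← Finset.mul_sum, hsum, hN1]
      ring
    rw [h4]
    simp [mul_assoc]
  · rw [hsum, hN1, Mfun]
    ring
  · rw [Mfun]
    nlinarith
end

section
/- Let z = (μ,x) ∈ ℝ × ℝⁿ with μ > 0, let 0 < β < μ, let γ > 0, let δ ∈ (0,1), let C ∈ ℝ with ‖H(z)‖² ≤ C, and let Δz = (Δμ, Δx) satisfy H'(z)Δz = −H(z) + β e⁽¹⁾, where e⁽¹⁾ = (1,0) ∈ ℝ × ℝⁿ, H'(z) : (Δμ, Δx) ↦ (Δμ, AΔx + B(Δμ·V₁ + V₂Δx)), (V₁)_i = μ/√(μ² + x_i²) − 1 and V₂ = diag(x_i/√(μ² + x_i²)). Then there exists a nonnegative integer l such that ‖H(z + δˡ Δz)‖² ≤ C − γ‖δˡ Δz‖². -/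
theorem stmt16 {n : ℕ} (A B : Matrix (Fin n) (Fin n) ℝ) (b : Fin n → ℝ)
    (μ : ℝ) (x : Fin n → ℝ) (β γ δ C : ℝ)
    (hμ : 0 < μ) (hβ0 : 0 < β) (hβμ : β < μ) (hγ : 0 < γ) (hδ : δ ∈ Set.Ioo (0 : ℝ) 1)
    (hC : Mfun A B b μ x ≤ C)
    (Δμ : ℝ) (Δx : Fin n → ℝ)
    (hN1 : Δμ = -μ + β)
    (hN2 : HDvec A B μ x Δμ Δx = -(Hvec A B b μ x)) :
    ∃ l : ℕ,
      Mfun A B b (μ + δ ^ l * Δμ) (x + δ ^ l • Δx) ≤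
        C - γ * ((δ ^ l) ^ 2 * (Δμ ^ 2 + ∑ i, Δx i ^ 2)) := by
  have hphi : ∀ j, HasDerivAt (fun t : ℝ => PhiV (μ + t * Δμ) (x + t • Δx) j)
      (Δμ * (μ / Real.sqrt (μ ^ 2 + x j ^ 2) - 1) +
        (x j / Real.sqrt (μ ^ 2 + x j ^ 2)) * Δx j) 0 := by
    intro j
    have hpos : 0 < μ ^ 2 + x j ^ 2 := by positivity
    have h1 : HasDerivAt (fun t : ℝ => μ + t * Δμ) Δμ 0 := by
      simpa using ((hasDerivAt_id (0 : ℝ)).mul_const Δμ).const_add μ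
    have h2 : HasDerivAt (fun t : ℝ => x j + t * Δx j) (Δx j) 0 := by
      simpa using ((hasDerivAt_id (0 : ℝ)).mul_const (Δx j)).const_add (x j)
    have h3 := (((h1.fun_pow 2).fun_add (h2.fun_pow 2)).sqrt (by simpa using hpos.ne')).fun_sub h1
    have hs : Real.sqrt (μ ^ 2 + x j ^ 2) ≠ 0 := (Real.sqrt_pos.mpr hpos).ne'
    have h4 := h3.congr_deriv (g' := Δμ * (μ / Real.sqrt (μ ^ 2 + x j ^ 2) - 1) +
        (x j / Real.sqrt (μ ^ 2 + x j ^ 2)) * Δx j) (by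
          simp only [zero_mul, add_zero]
          field_simp
          norm_num
          try ring)
    exact h4
  have hH : ∀ i, HasDerivAt (fun t : ℝ => Hvec A B b (μ + t * Δμ) (x + t • Δx) i)
      (HDvec A B μ x Δμ Δx i) 0 := by
    intro i
    have h2 : ∀ j, HasDerivAt (fun t : ℝ => (x + t • Δx) j) (Δx j) 0 := by
      intro j
      simpa using ((hasDerivAt_id (0 : ℝ)).mul_const (Δx j)).const_add (x j)
    have ha := HasDerivAt.fun_sum (u := Finset.univ) (fun j _ => (h2 j).const_mul (A i j))
    have hb := HasDerivAt.fun_sum (u := Finset.univ) (fun j _ => (hphi j).const_mul (B i j))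
    exact (ha.fun_add hb).sub_const (b i)
  have hM : HasDerivAt (fun t : ℝ => Mfun A B b (μ + t * Δμ) (x + t • Δx) +
      γ * (t ^ 2 * (Δμ ^ 2 + ∑ i, Δx i ^ 2)))
      (2 * μ * Δμ - 2 * ∑ i, Hvec A B b μ x i ^ 2) 0 := by
    have h1 : HasDerivAt (fun t : ℝ => μ + t * Δμ) Δμ 0 := by
      simpa using ((hasDerivAt_id (0 : ℝ)).mul_const Δμ).const_add μ
    have hs := HasDerivAt.fun_sum (u := Finset.univ) (fun j _ => (hH j).fun_pow 2)
    have hq := ((((hasDerivAt_id (0 : ℝ)).fun_pow 2).mul_const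
      (Δμ ^ 2 + ∑ i, Δx i ^ 2)).const_mul γ)
    refine (((h1.fun_pow 2).fun_add hs).fun_add hq).congr_deriv ?_
    simp only [hN2, zero_mul, add_zero, zero_smul, Pi.neg_apply, id]
    rw [Finset.mul_sum, sub_eq_add_neg, ← Finset.sum_neg_distrib]
    simp
    apply Finset.sum_congr rfl
    intros
    ring
  have hneg : 2 * μ * Δμ - 2 * ∑ i, Hvec A B b μ x i ^ 2 < 0 := by
    have : 0 ≤ ∑ i, Hvec A B b μ x i ^ 2 := Finset.sum_nonneg fun i _ => sq_nonneg _
    rw [hN1]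
    nlinarith [mul_pos hμ (sub_pos.mpr hβμ)]
  have hev := (hasDerivAt_iff_tendsto_slope.mp hM).eventually (gt_mem_nhds hneg)
  have hlim : Filter.Tendsto (fun l : ℕ => δ ^ l) Filter.atTop (nhdsWithin 0 {0}ᶜ) := by
    refine tendsto_nhdsWithin_iff.mpr ⟨tendsto_pow_atTop_nhds_zero_of_lt_one hδ.1.le hδ.2, ?_⟩
    exact Filter.Eventually.of_forall fun l => (pow_pos hδ.1 l).ne'
  obtain ⟨l, hl⟩ := (hlim.eventually hev).exists
  refine ⟨l, ?_⟩
  have hp : 0 < δ ^ l := pow_pos hδ.1 l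
  rw [slope_def_field, div_lt_iff₀ (by simpa using hp)] at hl
  simp only [zero_mul, add_zero, zero_smul, ne_eq, OfNat.ofNat_ne_zero, not_false_eq_true,
    zero_pow, mul_zero] at hl
  linarith
end

section
/- Suppose A + BD is nonsingular for every diagonal matrix D = diag(d_1,…,d_n) with d_i ∈ [−1,1]. Let θ, δ ∈ (0,1), let z⁽⁰⁾ = (μ⁽⁰⁾, x⁽⁰⁾) with μ⁽⁰⁾ > 0, set C⁽⁰⁾ = ‖H(z⁽⁰⁾)‖², and let γ ∈ (0,1) be such that β⁽⁰⁾ = γC⁽⁰⁾ < μ⁽⁰⁾ and γμ⁽⁰⁾ < 1. Suppose sequences {z⁽ᵏ⁾}, {C⁽ᵏ⁾}, {β⁽ᵏ⁾} satisfy, for every k with H(z⁽ᵏ⁾) ≠ 0: Δz⁽ᵏ⁾ solves H'(z⁽ᵏ⁾)Δz⁽ᵏ⁾ = −H(z⁽ᵏ⁾) + β⁽ᵏ⁾ e⁽¹⁾ (e⁽¹⁾ = (1,0)); either ‖H(z⁽ᵏ⁾ + Δz⁽ᵏ⁾)‖ ≤ θ‖H(z⁽ᵏ⁾)‖ and z⁽ᵏ⁺¹⁾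 = z⁽ᵏ⁾ + Δz⁽ᵏ⁾, or z⁽ᵏ⁺¹⁾ = z⁽ᵏ⁾ + α⁽ᵏ⁾Δz⁽ᵏ⁾ where α⁽ᵏ⁾ is the largest element of {1, δ, δ², …} with ‖H(z⁽ᵏ⁾ + α⁽ᵏ⁾Δz⁽ᵏ⁾)‖² ≤ C⁽ᵏ⁾ − γ‖α⁽ᵏ⁾Δz⁽ᵏ⁾‖²; and C⁽ᵏ⁺¹⁾ = (C⁽ᵏ⁾ + 1)‖H(z⁽ᵏ⁺¹⁾)‖² / (‖H(z⁽ᵏ⁺¹⁾)‖² + 1), β⁽ᵏ⁺¹⁾ = γC⁽ᵏ⁺¹⁾. If H(z⁽ᵏ⁾) ≠ 0 for all k, then every accumulation point z* = (μ*, x*) of the sequence {z⁽ᵏ⁾} satisfies H(z*) = 0; that is, μ* = 0 and x* solves the GAVE Ax + B|x| = b. -/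
/-- The non-monotone line-search condition `‖H(z + αΔz)‖² ≤ C − γ‖αΔz‖²`. -/
noncomputable def LS {n : ℕ} (A B : Matrix (Fin n) (Fin n) ℝ) (b : Fin n → ℝ)
    (μ : ℝ) (x : Fin n → ℝ) (Δμ : ℝ) (Δx : Fin n → ℝ) (C γ α : ℝ) : Prop :=
  Mfun A B b (μ + α * Δμ) (x + α • Δx) ≤ C - γ * (α ^ 2 * (Δμ ^ 2 + ∑ i, Δx i ^ 2))

open Filter Topology

theorem Mfun_nonneg' {n : ℕ} (A B : Matrix (Fin n) (Fin n) ℝ) (b : Fin n → ℝ)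
    (μ : ℝ) (x : Fin n → ℝ) : 0 ≤ Mfun A B b μ x := by
  unfold Mfun
  have : 0 ≤ ∑ i, Hvec A B b μ x i ^ 2 := Finset.sum_nonneg (fun i _ => sq_nonneg _)
  positivity

theorem Mfun_zero {n : ℕ} {A B : Matrix (Fin n) (Fin n) ℝ} {b : Fin n → ℝ}
    {μ : ℝ} {x : Fin n → ℝ} (h : Mfun A B b μ x = 0) : μ = 0 ∧ Hvec A B b μ x = 0 := by
  unfold Mfun at h
  have h1 : 0 ≤ ∑ i, Hvec A B b μ x i ^ 2 := Finset.sum_nonneg (fun i _ => sq_nonneg _)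
  have h2 : μ ^ 2 = 0 := by nlinarith [sq_nonneg μ]
  have h3 : ∑ i, Hvec A B b μ x i ^ 2 = 0 := by linarith
  refine ⟨by simpa using h2, ?_⟩
  rw [Finset.sum_eq_zero_iff_of_nonneg (fun i _ => sq_nonneg _)] at h3
  funext i
  simpa using h3 i (Finset.mem_univ i)

theorem Hvec_cont {n : ℕ} (A B : Matrix (Fin n) (Fin n) ℝ) (b : Fin n → ℝ) :
    Continuous (fun p : ℝ × (Fin n → ℝ) => Hvec A B b p.1 p.2) := by
  unfold Hvec PhiV
  refine Continuous.sub (Continuous.add ?_ ?_) continuous_const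
  · exact Continuous.matrix_mulVec continuous_const continuous_snd
  · refine Continuous.matrix_mulVec continuous_const ?_
    fun_prop

theorem Mfun_cont {n : ℕ} (A B : Matrix (Fin n) (Fin n) ℝ) (b : Fin n → ℝ) :
    Continuous (fun p : ℝ × (Fin n → ℝ) => Mfun A B b p.1 p.2) := by
  unfold Mfun
  have h := Hvec_cont A B b
  have h' : ∀ i, Continuous (fun p : ℝ × (Fin n → ℝ) => Hvec A B b p.1 p.2 i) :=
    fun i => (continuous_apply i).comp h
  fun_prop

/-- derivative along a line -/
theorem Mfun_deriv {n : ℕ} (A B : Matrix (Fin n) (Fin n) ℝ) (b : Fin n → ℝ)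
    (μ : ℝ) (hμ : 0 < μ) (x : Fin n → ℝ) (dμ : ℝ) (dx : Fin n → ℝ) :
    HasDerivAt (fun t : ℝ => Mfun A B b (μ + t * dμ) (x + t • dx))
      (2 * μ * dμ + ∑ i, 2 * Hvec A B b μ x i * HDvec A B μ x dμ dx i) 0 := by
  have hpos : ∀ i, 0 < μ ^ 2 + x i ^ 2 := fun i => by positivity
  have hm : HasDerivAt (fun t : ℝ => μ + t * dμ) dμ 0 := by
    simpa using ((hasDerivAt_id (0:ℝ)).mul_const dμ).const_add μ
  have hx : ∀ i, HasDerivAt (fun t : ℝ => x i + t * dx i) (dx i) 0 := fun i => by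
    simpa using ((hasDerivAt_id (0:ℝ)).mul_const (dx i)).const_add (x i)
  have hphi : ∀ i, HasDerivAt (fun t : ℝ => PhiV (μ + t * dμ) (x + t • dx) i)
      (dμ * (μ / Real.sqrt (μ ^ 2 + x i ^ 2) - 1) +
        (x i / Real.sqrt (μ ^ 2 + x i ^ 2)) * dx i) 0 := fun i => by
    have h1 := (((hm.pow 2).add ((hx i).pow 2)).sqrt (by simpa using (hpos i).ne')).sub hm
    have hs : Real.sqrt (μ ^ 2 + x i ^ 2) ≠ 0 := (Real.sqrt_pos.2 (hpos i)).ne'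
    refine HasDerivAt.congr_deriv h1 ?_
    simp only [Pi.add_apply, Pi.pow_apply, zero_mul, add_zero]
    field_simp
    simp
    ring
  have hH : ∀ i, HasDerivAt (fun t : ℝ => Hvec A B b (μ + t * dμ) (x + t • dx) i)
      (HDvec A B μ x dμ dx i) 0 := fun i => by
    have h1 : HasDerivAt (fun t : ℝ => ∑ j, A i j * (x j + t * dx j))
        (∑ j, A i j * dx j) 0 :=
      HasDerivAt.fun_sum (fun j _ => (hx j).const_mul (A i j))
    have h2 := HasDerivAt.fun_sum (u := Finset.univ) (fun j _ => (hphi j).const_mul (B i j))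
    have h3 := (h1.add h2).sub_const (b i)
    exact h3
  have h4 := (hm.pow 2).add
    (HasDerivAt.fun_sum (u := Finset.univ) (fun i _ => (hH i).pow 2))
  refine HasDerivAt.congr_deriv h4 ?_
  simp

noncomputable def Gmat {n : ℕ} (A B : Matrix (Fin n) (Fin n) ℝ) (μ : ℝ) (x : Fin n → ℝ) :
    Matrix (Fin n) (Fin n) ℝ :=
  A + B * Matrix.diagonal (fun i => x i / Real.sqrt (μ ^ 2 + x i ^ 2))

noncomputable def rhsv {n : ℕ} (A B : Matrix (Fin n) (Fin n) ℝ) (b : Fin n → ℝ) (β μ : ℝ)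
    (x : Fin n → ℝ) : Fin n → ℝ :=
  -(Hvec A B b μ x) -
    B.mulVec (fun i => (-μ + β) * (μ / Real.sqrt (μ ^ 2 + x i ^ 2) - 1))

theorem HDvec_eq {n : ℕ} (A B : Matrix (Fin n) (Fin n) ℝ) (μ : ℝ) (x : Fin n → ℝ)
    (dμ : ℝ) (dx : Fin n → ℝ) :
    HDvec A B μ x dμ dx = (Gmat A B μ x).mulVec dx +
      B.mulVec (fun i => dμ * (μ / Real.sqrt (μ ^ 2 + x i ^ 2) - 1)) := by
  unfold HDvec Gmat
  rw [Matrix.add_mulVec, ← Matrix.mulVec_mulVec, add_assoc, ← Matrix.mulVec_add]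
  congr 2
  funext i
  simp [Matrix.mulVec_diagonal]
  ring

theorem newton_iff {n : ℕ} (A B : Matrix (Fin n) (Fin n) ℝ) (b : Fin n → ℝ)
    (hAB : ∀ d : Fin n → ℝ, (∀ i, d i ∈ Set.Icc (-1 : ℝ) 1) →
      (A + B * Matrix.diagonal d).det ≠ 0) (β μ : ℝ) (x : Fin n → ℝ) (dx : Fin n → ℝ) :
    (Gmat A B μ x).det ≠ 0 ∧ (HDvec A B μ x (-μ + β) dx = -(Hvec A B b μ x) ↔
      dx = (Gmat A B μ x)⁻¹.mulVec (rhsv A B b β μ x)) := by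
  have hd : (Gmat A B μ x).det ≠ 0 := by
    apply hAB
    intro i
    rw [Set.mem_Icc, ← abs_le, abs_div, abs_of_nonneg (Real.sqrt_nonneg _)]
    apply div_le_one_of_le₀ _ (Real.sqrt_nonneg _)
    apply Real.abs_le_sqrt
    nlinarith [sq_nonneg μ]
  refine ⟨hd, ?_⟩
  have hu : IsUnit (Gmat A B μ x).det := isUnit_iff_ne_zero.2 hd
  rw [HDvec_eq, ← eq_sub_iff_add_eq]
  change _ = rhsv A B b β μ x ↔ _
  constructor
  · intro h
    rw [← h, Matrix.mulVec_mulVec, Matrix.nonsing_inv_mul _ hu, Matrix.one_mulVec]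
  · intro h
    rw [h, Matrix.mulVec_mulVec, Matrix.mul_nonsing_inv _ hu, Matrix.one_mulVec]

theorem newton_cont {n : ℕ} (A B : Matrix (Fin n) (Fin n) ℝ) (b : Fin n → ℝ)
    (β μ : ℝ) (x : Fin n → ℝ) (hμ : 0 < μ) (hd : (Gmat A B μ x).det ≠ 0) :
    ContinuousAt (fun p : ℝ × (ℝ × (Fin n → ℝ)) =>
      (Gmat A B p.2.1 p.2.2)⁻¹.mulVec (rhsv A B b p.1 p.2.1 p.2.2)) (β, (μ, x)) := by
  have hs : ∀ i, Real.sqrt (μ ^ 2 + x i ^ 2) ≠ 0 := fun i => by positivity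
  have hsq : ∀ i, ContinuousAt (fun p : ℝ × (ℝ × (Fin n → ℝ)) =>
      Real.sqrt (p.2.1 ^ 2 + p.2.2 i ^ 2)) (β, (μ, x)) := fun i => by
    apply Continuous.continuousAt; fun_prop
  have hx : ∀ i, ContinuousAt (fun p : ℝ × (ℝ × (Fin n → ℝ)) => p.2.2 i) (β, (μ, x)) :=
    fun i => by apply Continuous.continuousAt; fun_prop
  have hm : ContinuousAt (fun p : ℝ × (ℝ × (Fin n → ℝ)) => p.2.1) (β, (μ, x)) := by
    apply Continuous.continuousAt; fun_prop
  have hb : ContinuousAt (fun p : ℝ × (ℝ × (Fin n → ℝ)) => -p.2.1 + p.1) (β, (μ, x)) := by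
    apply Continuous.continuousAt; fun_prop
  have hmv : ∀ (N : ℝ × (ℝ × (Fin n → ℝ)) → Matrix (Fin n) (Fin n) ℝ)
      (v : ℝ × (ℝ × (Fin n → ℝ)) → (Fin n → ℝ)), ContinuousAt N (β, (μ, x)) →
      ContinuousAt v (β, (μ, x)) → ContinuousAt (fun p => (N p).mulVec (v p)) (β, (μ, x)) := by
    intro N v hN hv
    have hc : Continuous (fun q : Matrix (Fin n) (Fin n) ℝ × (Fin n → ℝ) => q.1.mulVec q.2) :=
      Continuous.matrix_mulVec continuous_fst continuous_snd
    exact ContinuousAt.comp (x := (β, (μ, x))) (f := fun p => (N p, v p))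
      hc.continuousAt (hN.prodMk hv)
  have hG : ContinuousAt (fun p : ℝ × (ℝ × (Fin n → ℝ)) => Gmat A B p.2.1 p.2.2)
      (β, (μ, x)) := by
    unfold Gmat
    have hv : ContinuousAt (fun p : ℝ × (ℝ × (Fin n → ℝ)) =>
        (fun i => p.2.2 i / Real.sqrt (p.2.1 ^ 2 + p.2.2 i ^ 2))) (β, (μ, x)) :=
      continuousAt_pi.2 (fun i => (hx i).div (hsq i) (hs i))
    have hc : Continuous (fun v : Fin n → ℝ => A + B * Matrix.diagonal v) :=
      continuous_const.add (continuous_const.matrix_mul (continuous_id.matrix_diagonal))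
    exact ContinuousAt.comp (x := (β, (μ, x))) (g := fun v : Fin n → ℝ => A + B * Matrix.diagonal v)
      hc.continuousAt hv
  apply hmv
  · simp only [Matrix.inv_def, Ring.inverse_eq_inv']
    have h1 : ContinuousAt (fun p : ℝ × (ℝ × (Fin n → ℝ)) => (Gmat A B p.2.1 p.2.2).det)
        (β, (μ, x)) :=
      ContinuousAt.comp (x := (β, (μ, x))) (g := fun N : Matrix (Fin n) (Fin n) ℝ => N.det)
        (Continuous.matrix_det continuous_id).continuousAt hG
    have h2 : ContinuousAt (fun p : ℝ × (ℝ × (Fin n → ℝ)) => (Gmat A B p.2.1 p.2.2).adjugate)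
        (β, (μ, x)) :=
      ContinuousAt.comp (x := (β, (μ, x)))
        (g := fun N : Matrix (Fin n) (Fin n) ℝ => N.adjugate)
        (Continuous.matrix_adjugate continuous_id).continuousAt hG
    exact (h1.inv₀ hd).smul h2
  · unfold rhsv
    refine ContinuousAt.sub ?_ (hmv _ _ continuousAt_const ?_)
    · exact (((Hvec_cont A B b).comp continuous_snd).neg).continuousAt
    · exact continuousAt_pi.2 (fun i => hb.mul ((hm.div (hsq i) (hs i)).sub continuousAt_const))

theorem newton_tendsto {n : ℕ} (A B : Matrix (Fin n) (Fin n) ℝ) (b : Fin n → ℝ)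
    (β : ℝ) (w : ℝ × (Fin n → ℝ)) (hμ : 0 < w.1) (hd : (Gmat A B w.1 w.2).det ≠ 0)
    (u : ℕ → ℝ) (v : ℕ → ℝ × (Fin n → ℝ)) (hu : Tendsto u atTop (𝓝 β))
    (hv : Tendsto v atTop (𝓝 w)) :
    Tendsto (fun j => (Gmat A B (v j).1 (v j).2)⁻¹.mulVec (rhsv A B b (u j) (v j).1 (v j).2))
      atTop (𝓝 ((Gmat A B w.1 w.2)⁻¹.mulVec (rhsv A B b β w.1 w.2))) := by
  have h3 := newton_cont A B b β w.1 w.2 hμ hd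
  have h4 : Tendsto (fun j => (u j, v j)) atTop (𝓝 (β, (w.1, w.2))) := hu.prodMk_nhds hv
  have h5 := Tendsto.comp (ContinuousAt.tendsto h3) h4
  simpa only [Function.comp_def] using h5

set_option maxHeartbeats 800000 in
theorem stmt18 {n : ℕ} (A B : Matrix (Fin n) (Fin n) ℝ) (b : Fin n → ℝ)
    (hAB : ∀ d : Fin n → ℝ, (∀ i, d i ∈ Set.Icc (-1 : ℝ) 1) →
      (A + B * Matrix.diagonal d).det ≠ 0)
    (θ δ γ : ℝ) (hθ : θ ∈ Set.Ioo (0 : ℝ) 1) (hδ : δ ∈ Set.Ioo (0 : ℝ) 1)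
    (hγ : γ ∈ Set.Ioo (0 : ℝ) 1)
    (z : ℕ → ℝ × (Fin n → ℝ)) (C β : ℕ → ℝ)
    (hμ0 : 0 < (z 0).1)
    (hC0 : C 0 = Mfun A B b (z 0).1 (z 0).2)
    (hβ0 : β 0 = γ * C 0) (hβ0μ : β 0 < (z 0).1) (hγμ0 : γ * (z 0).1 < 1)
    -- the iteration: for every `k` with `H(z⁽ᵏ⁾) ≠ 0`, `Δz⁽ᵏ⁾` solves the perturbed
    -- Newton system and `z⁽ᵏ⁺¹⁾` is produced by the fast step or by the non-monotone
    -- line search with the largest step length in `{1, δ, δ², …}`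
    (hstep : ∀ k : ℕ,
      (((z k).1, Hvec A B b (z k).1 (z k).2) : ℝ × (Fin n → ℝ)) ≠ 0 →
      ∃ Δ : ℝ × (Fin n → ℝ),
        (Δ.1 = -(z k).1 + β k ∧
          HDvec A B (z k).1 (z k).2 Δ.1 Δ.2 = -(Hvec A B b (z k).1 (z k).2)) ∧
        ((Real.sqrt (Mfun A B b ((z k).1 + Δ.1) ((z k).2 + Δ.2)) ≤
            θ * Real.sqrt (Mfun A B b (z k).1 (z k).2) ∧
          z (k + 1) = z k + Δ) ∨
         (¬ (Real.sqrt (Mfun A B b ((z k).1 + Δ.1) ((z k).2 + Δ.2)) ≤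
            θ * Real.sqrt (Mfun A B b (z k).1 (z k).2)) ∧
          ∃ l : ℕ,
            (∀ m : ℕ, m < l → ¬ LS A B b (z k).1 (z k).2 Δ.1 Δ.2 (C k) γ (δ ^ m)) ∧
            LS A B b (z k).1 (z k).2 Δ.1 Δ.2 (C k) γ (δ ^ l) ∧
            z (k + 1) = z k + δ ^ l • Δ)))
    (hupd : ∀ k : ℕ,
      C (k + 1) = (C k + 1) * Mfun A B b (z (k + 1)).1 (z (k + 1)).2 /
          (Mfun A B b (z (k + 1)).1 (z (k + 1)).2 + 1) ∧
        β (k + 1) = γ * C (k + 1))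
    (hne : ∀ k : ℕ, (((z k).1, Hvec A B b (z k).1 (z k).2) : ℝ × (Fin n → ℝ)) ≠ 0)
    (zstar : ℝ × (Fin n → ℝ))
    (hacc : ∃ σ : ℕ → ℕ, StrictMono σ ∧
      Filter.Tendsto (fun j => z (σ j)) Filter.atTop (nhds zstar)) :
    zstar.1 = 0 ∧ Hvec A B b zstar.1 zstar.2 = 0 ∧
      A.mulVec zstar.2 + B.mulVec (fun i => |zstar.2 i|) = b := by
  obtain ⟨hθ0, hθ1⟩ := hθ
  obtain ⟨hδ0, hδ1⟩ := hδ
  obtain ⟨hγ0, hγ1⟩ := hγ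
  obtain ⟨σ, hσ, hlim⟩ := hacc
  choose Δ hΔ hcase using fun k => hstep k (hne k)
  set M : ℕ → ℝ := fun k => Mfun A B b (z k).1 (z k).2 with hM
  have hMpos : ∀ k, 0 < M k := fun k => by
    refine lt_of_le_of_ne (Mfun_nonneg' _ _ _ _ _) (fun h => hne k ?_)
    obtain ⟨h1, h2⟩ := Mfun_zero h.symm
    rw [h2, h1]; rfl
  have hβ : ∀ k, β k = γ * C k := fun k => by
    cases k with
    | zero => exact hβ0
    | succ k => exact (hupd k).2
  have hC1 : ∀ k, C (k + 1) = (C k + 1) * M (k + 1) / (M (k + 1) + 1) := fun k => (hupd k).1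
  -- step descent
  have hdesc : ∀ k, M k ≤ C k → M (k + 1) ≤ C k := by
    intro k hk
    rcases hcase k with ⟨h1, h2⟩ | ⟨-, l, -, h2, h3⟩
    · have h4 : Real.sqrt (M (k + 1)) ≤ θ * Real.sqrt (M k) := by
        simp only [hM, h2]; exact h1
      have h5 : Real.sqrt (M (k + 1)) ≤ Real.sqrt (M k) := by
        nlinarith [Real.sqrt_nonneg (M k)]
      exact ((Real.sqrt_le_sqrt_iff (hMpos k).le).1 h5).trans hk
    · have h4 : M (k + 1) ≤ C k - γ * ((δ ^ l) ^ 2 * ((Δ k).1 ^ 2 + ∑ i, (Δ k).2 i ^ 2)) := by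
        simp only [hM, h3]; exact h2
      have : 0 ≤ γ * ((δ ^ l) ^ 2 * ((Δ k).1 ^ 2 + ∑ i, (Δ k).2 i ^ 2)) := by positivity
      linarith
  have hMC : ∀ k, M k ≤ C k := by
    intro k
    induction k with
    | zero => exact hC0.ge
    | succ k ih =>
      have h1 := hdesc k ih
      rw [hC1, le_div_iff₀ (by linarith [hMpos (k+1)])]
      nlinarith [hMpos (k+1)]
  have hMC' : ∀ k, M (k + 1) ≤ C k := fun k => hdesc k (hMC k)
  have hCdiff : ∀ k, C k - M (k + 1) = (C k - C (k + 1)) * (M (k + 1) + 1) := by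
    intro k
    have : M (k + 1) + 1 ≠ 0 := by linarith [hMpos (k+1)]
    rw [hC1]; field_simp; ring
  have hCanti : Antitone C := by
    apply antitone_nat_of_succ_le
    intro k
    by_contra h
    push Not at h
    nlinarith [hCdiff k, hMC' k, hMpos (k+1)]
  have hCpos : ∀ k, 0 < C k := fun k => (hMpos k).trans_le (hMC k)
  obtain ⟨c, hc⟩ : ∃ c, Tendsto C atTop (𝓝 c) :=
    ⟨_, tendsto_atTop_ciInf hCanti ⟨0, by rintro _ ⟨k, rfl⟩; exact (hCpos k).le⟩⟩
  have hc0 : 0 ≤ c := ge_of_tendsto' hc (fun k => (hCpos k).le)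
  have hgap : Tendsto (fun k => C k - M (k + 1)) atTop (𝓝 0) := by
    have h1 : Tendsto (fun k => (C k - C (k + 1)) * (C 0 + 1)) atTop (𝓝 0) := by
      have := (hc.sub ((tendsto_add_atTop_iff_nat 1).2 hc)).mul_const (C 0 + 1)
      simpa using this
    refine squeeze_zero (fun k => sub_nonneg.2 (hMC' k)) (fun k => ?_) h1
    rw [hCdiff]
    apply mul_le_mul_of_nonneg_left
    · linarith [hMC' k, hCanti (Nat.zero_le k)]
    · linarith [hCanti (Nat.le_succ k)]
  have hMlim : Tendsto M atTop (𝓝 c) := by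
    rw [← tendsto_add_atTop_iff_nat 1]
    simpa using hc.sub hgap
  have hMstar : Mfun A B b zstar.1 zstar.2 = c := by
    have h1 := ((Mfun_cont A B b).tendsto zstar).comp hlim
    exact tendsto_nhds_unique h1 (hMlim.comp hσ.tendsto_atTop)
  have hmain : c = 0 := by
    by_contra hcne
    have hcpos : 0 < c := lt_of_le_of_ne hc0 (Ne.symm hcne)
    -- step lengths
    have hal : ∀ k, ∃ α : ℝ, 0 ≤ α ∧ α ≤ 1 ∧ z (k + 1) = z k + α • Δ k := by
      intro k
      rcases hcase k with ⟨-, h2⟩ | ⟨-, l, -, -, h3⟩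
      · exact ⟨1, zero_le_one, le_rfl, by simpa using h2⟩
      · exact ⟨δ ^ l, by positivity, pow_le_one₀ hδ0.le hδ1.le, h3⟩
    have hmu : ∀ k, β k ≤ (z k).1 ∧ (z k).1 ≤ (z 0).1 := by
      intro k
      induction k with
      | zero => exact ⟨hβ0μ.le, le_rfl⟩
      | succ k ih =>
        obtain ⟨α, ha0, ha1, hz⟩ := hal k
        have h1 : (z (k + 1)).1 = (z k).1 + α * (-(z k).1 + β k) := by
          rw [hz, ← (hΔ k).1]; rfl
        have h2 : β (k + 1) ≤ β k := by
          rw [hβ, hβ]; exact mul_le_mul_of_nonneg_left (hCanti (Nat.le_succ k)) hγ0.le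
        constructor
        · nlinarith [ih.1]
        · nlinarith [ih.1, ih.2]
    have hβlim : Tendsto β atTop (𝓝 (γ * c)) := by
      have : β = fun k => γ * C k := funext hβ
      rw [this]; exact hc.const_mul γ
    have hβσ : Tendsto (fun j => β (σ j)) atTop (𝓝 (γ * c)) := hβlim.comp hσ.tendsto_atTop
    have hμlim : Tendsto (fun j => (z (σ j)).1) atTop (𝓝 zstar.1) :=
      (continuous_fst.tendsto zstar).comp hlim
    have hμge : γ * c ≤ zstar.1 := le_of_tendsto_of_tendsto' hβσ hμlim (fun j => (hmu _).1)
    have hμle : zstar.1 ≤ (z 0).1 := le_of_tendsto' hμlim (fun j => (hmu _).2)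
    have hμpos : 0 < zstar.1 := lt_of_lt_of_le (by positivity) hμge
    -- limit direction
    have hd := (newton_iff A B b hAB (γ * c) zstar.1 zstar.2 0).1
    set ds : ℝ × (Fin n → ℝ) := (-zstar.1 + γ * c,
      (Gmat A B zstar.1 zstar.2)⁻¹.mulVec (rhsv A B b (γ * c) zstar.1 zstar.2)) with hds
    have hdseq : HDvec A B zstar.1 zstar.2 ds.1 ds.2 = -(Hvec A B b zstar.1 zstar.2) :=
      ((newton_iff A B b hAB (γ * c) zstar.1 zstar.2 ds.2).2).2 rfl
    have hΔlim : Tendsto (fun j => Δ (σ j)) atTop (𝓝 ds) := by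
      have e : (fun j => Δ (σ j)) = fun j => (-(z (σ j)).1 + β (σ j),
          (Gmat A B (z (σ j)).1 (z (σ j)).2)⁻¹.mulVec
            (rhsv A B b (β (σ j)) (z (σ j)).1 (z (σ j)).2)) := by
        funext j
        have h1 := (hΔ (σ j)).1
        have h2 := (hΔ (σ j)).2
        rw [h1] at h2
        exact Prod.ext h1
          (((newton_iff A B b hAB (β (σ j)) (z (σ j)).1 (z (σ j)).2 _).2).1 h2)
      rw [e]
      refine (hμlim.neg.add hβσ).prodMk_nhds ?_
      exact newton_tendsto A B b (γ * c) zstar hμpos hd (fun j => β (σ j)) (fun j => z (σ j))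
        hβσ hlim
    -- sufficient decrease for the limit
    obtain ⟨L, hL⟩ : ∃ L : ℕ, Mfun A B b (zstar.1 + δ ^ L * ds.1) (zstar.2 + δ ^ L • ds.2) <
        c - γ * ((δ ^ L) ^ 2 * (ds.1 ^ 2 + ∑ i, ds.2 i ^ 2)) := by
      have h1 := Mfun_deriv A B b zstar.1 hμpos zstar.2 ds.1 ds.2
      have h2 : HasDerivAt (fun t : ℝ => γ * (t ^ 2 * (ds.1 ^ 2 + ∑ i, ds.2 i ^ 2))) 0 0 := by
        have := ((((hasDerivAt_id (0:ℝ)).pow 2).mul_const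
          (ds.1 ^ 2 + ∑ i, ds.2 i ^ 2)).const_mul γ)
        simpa using this
      have h3 := h1.add h2
      have hneg : 2 * zstar.1 * ds.1 + ∑ i, 2 * Hvec A B b zstar.1 zstar.2 i *
          HDvec A B zstar.1 zstar.2 ds.1 ds.2 i + 0 < 0 := by
        rw [hdseq]
        have e1 : ∑ i, 2 * Hvec A B b zstar.1 zstar.2 i * (-(Hvec A B b zstar.1 zstar.2)) i
            = -2 * (c - zstar.1 ^ 2) := by
          rw [← hMstar]; unfold Mfun
          rw [add_sub_cancel_left, Finset.mul_sum]
          refine Finset.sum_congr rfl (fun i _ => ?_)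
          rw [Pi.neg_apply]; ring
        rw [e1]
        change 2 * zstar.1 * (-zstar.1 + γ * c) + _ + 0 < 0
        have : γ * zstar.1 < 1 := lt_of_le_of_lt (mul_le_mul_of_nonneg_left hμle hγ0.le) hγμ0
        nlinarith
      have h5 := (hasDerivAt_iff_tendsto_slope_zero.1 h3)
      have h6 : Tendsto (fun L : ℕ => δ ^ L) atTop (𝓝[≠] 0) := by
        refine tendsto_nhdsWithin_iff.2
          ⟨tendsto_pow_atTop_nhds_zero_of_lt_one hδ0.le hδ1, ?_⟩
        exact Eventually.of_forall (fun L => (pow_pos hδ0 L).ne')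
      obtain ⟨L, hL⟩ := ((h5.comp h6).eventually (gt_mem_nhds hneg)).exists
      refine ⟨L, ?_⟩
      have hp := pow_pos hδ0 L
      simp only [Function.comp, Pi.add_apply, zero_add, zero_mul, zero_smul, add_zero,
        smul_eq_mul, hMstar, mul_zero, ne_eq, OfNat.ofNat_ne_zero, not_false_eq_true,
        zero_pow] at hL
      have := (mul_neg_iff.1 hL).resolve_right (fun h => absurd h.1 (by
        have := inv_pos.2 hp; linarith))
      linarith [this.2]
    have hds0 : Tendsto (fun j => (Δ (σ j)).1 ^ 2 + ∑ i, (Δ (σ j)).2 i ^ 2) atTop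
        (𝓝 (ds.1 ^ 2 + ∑ i, ds.2 i ^ 2)) := by
      have hcn : Continuous (fun p : ℝ × (Fin n → ℝ) => p.1 ^ 2 + ∑ i, p.2 i ^ 2) := by
        fun_prop
      exact (hcn.tendsto ds).comp hΔlim
    have hLSe : ∀ᶠ j in atTop, LS A B b (z (σ j)).1 (z (σ j)).2 (Δ (σ j)).1 (Δ (σ j)).2
        (C (σ j)) γ (δ ^ L) := by
      have h1 : Tendsto (fun j => Mfun A B b ((z (σ j)).1 + δ ^ L * (Δ (σ j)).1)
          ((z (σ j)).2 + δ ^ L • (Δ (σ j)).2)) atTop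
          (𝓝 (Mfun A B b (zstar.1 + δ ^ L * ds.1) (zstar.2 + δ ^ L • ds.2))) :=
        ((Mfun_cont A B b).tendsto (zstar + δ ^ L • ds)).comp
          (hlim.add (hΔlim.const_smul (δ ^ L)))
      have h2 := (hc.comp hσ.tendsto_atTop).sub ((hds0.const_mul ((δ ^ L) ^ 2)).const_mul γ)
      filter_upwards [h1.eventually_lt h2 hL] with j hj
      exact hj.le
    have hfast : ∀ᶠ k in atTop, θ * Real.sqrt (M k) < Real.sqrt (M (k + 1)) := by
      have h1 : Tendsto (fun k => θ * Real.sqrt (M k)) atTop (𝓝 (θ * Real.sqrt c)) :=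
        hMlim.sqrt.const_mul θ
      have h2 : Tendsto (fun k => Real.sqrt (M (k + 1))) atTop (𝓝 (Real.sqrt c)) :=
        ((tendsto_add_atTop_iff_nat 1).2 hMlim).sqrt
      refine h1.eventually_lt h2 ?_
      nlinarith [Real.sqrt_pos.2 hcpos]
    have hbound : ∀ᶠ j in atTop, γ * ((δ ^ L) ^ 2 * ((Δ (σ j)).1 ^ 2 + ∑ i, (Δ (σ j)).2 i ^ 2))
        ≤ C (σ j) - M (σ j + 1) := by
      filter_upwards [hLSe, hσ.tendsto_atTop.eventually hfast] with j h1 h2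
      rcases hcase (σ j) with ⟨h3, h4⟩ | ⟨-, l, h3, h4, h5⟩
      · exfalso
        have h6 : Real.sqrt (M (σ j + 1)) ≤ θ * Real.sqrt (M (σ j)) := by
          simp only [hM, h4]; exact h3
        linarith
      · have hl : l ≤ L := by
          by_contra h
          exact h3 L (by omega) h1
        have h6 : M (σ j + 1) ≤ C (σ j) -
            γ * ((δ ^ l) ^ 2 * ((Δ (σ j)).1 ^ 2 + ∑ i, (Δ (σ j)).2 i ^ 2)) := by
          simp only [hM, h5]; exact h4
        have h7 : δ ^ L ≤ δ ^ l := pow_le_pow_of_le_one hδ0.le hδ1.le hl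
        have h8 : γ * ((δ ^ L) ^ 2 * ((Δ (σ j)).1 ^ 2 + ∑ i, (Δ (σ j)).2 i ^ 2)) ≤
            γ * ((δ ^ l) ^ 2 * ((Δ (σ j)).1 ^ 2 + ∑ i, (Δ (σ j)).2 i ^ 2)) := by
          gcongr
        linarith
    have hle := le_of_tendsto_of_tendsto ((hds0.const_mul ((δ ^ L) ^ 2)).const_mul γ)
      (hgap.comp hσ.tendsto_atTop) hbound
    have hsum : 0 ≤ ∑ i, ds.2 i ^ 2 := Finset.sum_nonneg (fun i _ => sq_nonneg _)
    have hN : ds.1 ^ 2 + ∑ i, ds.2 i ^ 2 = 0 := by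
      by_contra hn
      have h1 : 0 < ds.1 ^ 2 + ∑ i, ds.2 i ^ 2 := lt_of_le_of_ne (by positivity) (Ne.symm hn)
      have : 0 < γ * ((δ ^ L) ^ 2 * (ds.1 ^ 2 + ∑ i, ds.2 i ^ 2)) := by positivity
      linarith
    have hd1 : ds.1 = 0 := by
      have : ds.1 ^ 2 = 0 := by nlinarith [sq_nonneg ds.1]
      simpa using this
    have hd2 : ds.2 = 0 := by
      have h3 : ∑ i, ds.2 i ^ 2 = 0 := by nlinarith [sq_nonneg ds.1]
      rw [Finset.sum_eq_zero_iff_of_nonneg (fun i _ => sq_nonneg _)] at h3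
      funext i
      simpa using h3 i (Finset.mem_univ i)
    rw [hN, hd1, hd2, mul_zero, smul_zero, add_zero, add_zero, hMstar] at hL
    linarith
  rw [hmain] at hMstar
  obtain ⟨h1, h2⟩ := Mfun_zero hMstar
  refine ⟨h1, h2, ?_⟩
  rw [h1] at h2
  unfold Hvec at h2
  have h3 := sub_eq_zero.1 h2
  rw [← h3]
  congr 2
  funext i
  simp [PhiV, Real.sqrt_sq_eq_abs]
end
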